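/- arXiv:1012.5134 — 3 statements merged into one kernel-verified Lean document; each statement's English description precedes it below -/
import Mathlib

section
/- Let n ≥ 2 be a natural number, let c be a real number, and let w : ℕ → ℝ satisfy 0 < w(j) < π/2 for every integer j with 0 ≤ j ≤ n. If w satisfies the concavity condition with excess c on {0,…,n}, i.e. w(i−1) + w(i+1) ≤ 2·w(i) − c for every integer i with 1 ≤ i ≤ n−1, then c·⌊n/2⌋·⌈n/2⌉ < π. In particular the excess c can be at most of order π/n², which shows that the quadratic dependence on the fan length in the lower bound for the smallest angle of a positive angle structure is optimal. -/
/-!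
The excess `c` is a lower bound for minus the second difference of `w`, so `w j + c j² / 2` is
concave. Comparing its value at an interior point `a` with the chord through the endpoints
`0` and `n = a + b` gives `(a + b) w a ≥ b w 0 + a w (a + b) + c a b (a + b) / 2`
(`chord_bound`). The values at the endpoints are positive, hence `c a b < 2 w a < π`; the theorem
is the case `a = ⌊n/2⌋`, `b = ⌈n/2⌉`.

The chord inequality is obtained by bounding the slope `w (a + 1) - w a` from above by the average
slope on `[0, a]` (`slope_le_average`) and `w (a + b)` from above by the quadratic extrapolation of
this slope (`extrapolation_bound`).
-/
open Real

lemma slope_le_average (n : ℕ) (c : ℝ) (w : ℕ → ℝ)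
    (h : ∀ i : ℕ, i + 2 ≤ n → w i + w (i + 2) ≤ 2 * w (i + 1) - c) (j : ℕ) (hj : j + 1 ≤ n) :
    (j : ℝ) * (w (j + 1) - w j) ≤ w j - w 0 - c * (j * (j + 1) / 2) := by
  induction j with
  | zero => simp
  | succ j ih =>
    have h1 := ih (by omega)
    have h2 := mul_le_mul_of_nonneg_left (h j (by omega)) (by positivity : (0 : ℝ) ≤ j + 1)
    rw [show j + 1 + 1 = j + 2 from rfl]
    push_cast
    linarith

/-- The slope at `a + b` is bounded along with the value, since the value at `a + b + 1` is
reached from it. -/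
lemma extrapolation_bound (n : ℕ) (c : ℝ) (w : ℕ → ℝ)
    (h : ∀ i : ℕ, i + 2 ≤ n → w i + w (i + 2) ≤ 2 * w (i + 1) - c) (a b : ℕ)
    (hb : a + b + 1 ≤ n) :
    w (a + b + 1) - w (a + b) ≤ w (a + 1) - w a - b * c ∧
      w (a + b + 1) ≤ w a + (b + 1) * (w (a + 1) - w a) - c * ((b + 1) * b / 2) := by
  induction b with
  | zero => simp
  | succ b ih =>
    obtain ⟨h1, h2⟩ := ih (by omega)
    have h3 := h (a + b) (by omega)
    rw [show a + (b + 1) + 1 = a + b + 2 from rfl, show a + (b + 1) = a + b + 1 from rfl]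
    push_cast
    constructor <;> linarith

lemma chord_bound (c : ℝ) (w : ℕ → ℝ) (a b : ℕ) (hb : 1 ≤ b)
    (h : ∀ i : ℕ, i + 2 ≤ a + b → w i + w (i + 2) ≤ 2 * w (i + 1) - c) :
    b * w 0 + a * w (a + b) + c * (a * b * (a + b) / 2) ≤ (a + b) * w a := by
  obtain ⟨k, rfl⟩ : ∃ k, b = k + 1 := ⟨b - 1, by omega⟩
  have h1 := mul_le_mul_of_nonneg_left (slope_le_average _ c w h a (by omega))
    (by positivity : (0 : ℝ) ≤ k + 1)
  have h2 := mul_le_mul_of_nonneg_left (extrapolation_bound _ c w h a k (by omega)).2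
    (by positivity : (0 : ℝ) ≤ a)
  rw [show a + (k + 1) = a + k + 1 from rfl]
  push_cast
  linarith

/-- If `w : ℕ → ℝ` takes values in `(0, π/2)` on `{0,…,n}` (with `n ≥ 2`) and
satisfies the concavity condition with excess `c` on `{0,…,n}`, then
`c·⌊n/2⌋·⌈n/2⌉ < π`.  Hence the excess can be at most of order `π/n²`. -/
theorem concavity_excess_bound (n : ℕ) (hn : 2 ≤ n) (c : ℝ) (w : ℕ → ℝ)
    (hrange : ∀ j : ℕ, j ≤ n → 0 < w j ∧ w j < π / 2)
    (hconc : ∀ i : ℕ, 1 ≤ i → i ≤ n - 1 →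
      w (i - 1) + w (i + 1) ≤ 2 * w i - c) :
    c * ((n / 2 : ℕ) : ℝ) * (((n + 1) / 2 : ℕ) : ℝ) < π := by
  obtain ⟨a, ha⟩ : ∃ a, a = n / 2 := ⟨_, rfl⟩
  obtain ⟨b, hb⟩ : ∃ b, b = (n + 1) / 2 := ⟨_, rfl⟩
  rw [← ha, ← hb]
  have hab : a + b = n := by omega
  have key := chord_bound c w a b (by omega)
    (fun i hi => hconc (i + 1) (by omega) (by omega))
  have ha0 : (0 : ℝ) < a := by exact_mod_cast (by omega : 0 < a)
  have hb0 : (0 : ℝ) < b := by exact_mod_cast (by omega : 0 < b)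
  have p0 := mul_pos hb0 (hrange 0 (by omega)).1
  have pn := mul_pos ha0 (hrange (a + b) hab.le).1
  have hwa := (hrange a (by omega)).2
  have h2 : ((a : ℝ) + b) * (c * a * b / 2) < (a + b) * w a := by linarith
  have h3 := lt_of_mul_lt_mul_left h2 (by positivity)
  linarith
end

section
/- Let n ≥ 2 be an even natural number. Then there is no function w : ℕ → ℝ with 0 < w(j) < π/2 for every integer j with 0 ≤ j ≤ n that satisfies the concavity condition with excess 4π/n² on {0,…,n}, i.e. satisfies w(i−1) + w(i+1) ≤ 2·w(i) − 4π/n² for every integer i with 1 ≤ i ≤ n−1. (Equivalently: in a fan of length n+1 it is impossible for all the non-hinge angles x_i = 2·w(i) − w(i−1) − w(i+1) to be at least 4π/n² while all parameters satisfy w(j) ∈ (0, π/2).) -/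
/-!
Write `n = 2m`, `c = 4π/n² = π/m²` and consider the symmetric sums `S k = w (m - k) + w (m + k)`.
Adding the concavity conditions at `m - k` and `m + k` shows that the second differences of `S` are
at most `-2c`, while the condition at `m` gives `S 1 - S 0 ≤ -c`. Hence `S k ≤ 2 w(m) - k² c`, and
at `k = m` this reads `w 0 + w n ≤ 2 w(m) - π < 0`, contradicting positivity.
-/

open Real

/-- The symmetric sums about the midpoint `m` decay quadratically. The bound on the increment is
carried along because it is what the induction propagates. -/
lemma symm_sum_le (m : ℕ) (c : ℝ) (w : ℕ → ℝ)
    (h : ∀ i : ℕ, 1 ≤ i → i ≤ 2 * m - 1 → w (i - 1) + w (i + 1) ≤ 2 * w i - c) (k : ℕ)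
    (hk : k < m) :
    w (m - (k + 1)) + w (m + (k + 1)) ≤ w (m - k) + w (m + k) - (2 * k + 1) * c ∧
      w (m - (k + 1)) + w (m + (k + 1)) ≤ 2 * w m - ((k : ℝ) + 1) ^ 2 * c := by
  induction k with
  | zero =>
    have := h m (by omega) (by omega)
    norm_num
    constructor <;> linarith
  | succ k ih =>
    obtain ⟨h1, h2⟩ := ih (by omega)
    have ha := h (m - (k + 1)) (by omega) (by omega)
    have hb := h (m + (k + 1)) (by omega) (by omega)
    rw [show m - (k + 1) - 1 = m - (k + 1 + 1) by omega,
      show m - (k + 1) + 1 = m - k by omega] at ha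
    rw [show m + (k + 1) - 1 = m + k by omega,
      show m + (k + 1) + 1 = m + (k + 1 + 1) by omega] at hb
    push_cast
    constructor <;> linarith

/-- For an even `n ≥ 2`, there is no `w : ℕ → ℝ` with values in `(0, π/2)` on
`{0,…,n}` satisfying the concavity condition with excess `4π/n²`. -/
theorem no_concavity_excess_four_pi_div_sq (n : ℕ) (hn : 2 ≤ n) (heven : Even n) :
    ¬ ∃ w : ℕ → ℝ,
      (∀ j : ℕ, j ≤ n → 0 < w j ∧ w j < π / 2) ∧
      (∀ i : ℕ, 1 ≤ i → i ≤ n - 1 →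
        w (i - 1) + w (i + 1) ≤ 2 * w i - 4 * π / (n : ℝ) ^ 2) := by
  rintro ⟨w, hw, hc⟩
  obtain ⟨m, rfl⟩ := heven
  rw [← two_mul] at hw hc
  obtain ⟨-, hS⟩ := symm_sum_le m _ w hc (m - 1) (by omega)
  rw [show m - 1 + 1 = m by omega, Nat.sub_self, ← two_mul] at hS
  have hcast : ((m - 1 : ℕ) : ℝ) + 1 = m := by
    exact_mod_cast (show m - 1 + 1 = m by omega)
  have hm : (m : ℝ) ≠ 0 := by
    exact_mod_cast (show m ≠ 0 by omega)
  have hpi : (m : ℝ) ^ 2 * (4 * π / ((2 * m : ℕ) : ℝ) ^ 2) = π := by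
    push_cast
    field_simp
    ring
  rw [hcast, hpi] at hS
  linarith [(hw 0 (by omega)).1, (hw (2 * m) le_rfl).1, (hw m (by omega)).2]
end

section
/- Let n ≥ 2 be a natural number and let w : ℕ → ℝ satisfy 0 < w(j) < π/2 for every integer j with 0 ≤ j ≤ n. Then there exists an integer i with 1 ≤ i ≤ n−1 such that 2·w(i) − w(i−1) − w(i+1) < π/(⌊n/2⌋·⌈n/2⌉). In other words, in any fan of length n+1 whose parameters lie in (0, π/2), the smallest non-hinge angle x_i = 2·w(i) − w(i−1) − w(i+1) is strictly less than π/(⌊n/2⌋·⌈n/2⌉), a quantity of order 4π/n². -/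
/-!
If every angle were at least `c = π / (⌊n/2⌋⌈n/2⌉)`, then `v i = w i - (c/2) i (n - i)` would
be concave on `{0, …, n}`, because `i (n - i)` has constant second difference `-2`. Its endpoint
values `w 0` and `w n` are positive, so `v` is positive throughout (`pos_of_concave`). At
`i = ⌊n/2⌋` this says `w i > (c/2) ⌊n/2⌋⌈n/2⌉ = π/2`, a contradiction.
-/

open Real

/-- A concave sequence stays above the chord through its initial value: `v k` is at least the
convex combination `(k * v (k+1) + v 0) / (k+1)`. -/
lemma chord_le_of_concave {n : ℕ} {v : ℕ → ℝ}
    (hv : ∀ k, k + 2 ≤ n → v k + v (k + 2) ≤ 2 * v (k + 1)) :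
    ∀ k, k + 1 ≤ n → (k : ℝ) * v (k + 1) + v 0 ≤ (k + 1) * v k := by
  intro k
  induction k with
  | zero => intro _; simp
  | succ k ih =>
    intro hk
    have h1 := ih (by omega)
    have h2 := mul_le_mul_of_nonneg_left (hv k hk) (by positivity : (0 : ℝ) ≤ k + 1)
    push_cast
    rw [show k + 1 + 1 = k + 2 from rfl]
    linarith

lemma pos_of_concave {n : ℕ} {v : ℕ → ℝ}
    (hv : ∀ k, k + 2 ≤ n → v k + v (k + 2) ≤ 2 * v (k + 1))
    (h0 : 0 < v 0) (hn : 0 < v n) : ∀ k, k ≤ n → 0 < v k := by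
  intro k hk
  induction hk using Nat.decreasingInduction with
  | self => exact hn
  | of_succ k hk ih =>
    have h1 := chord_le_of_concave hv k hk
    have h2 : 0 < ((k : ℝ) + 1) * v k := by
      have : 0 ≤ (k : ℝ) * v (k + 1) := by positivity
      linarith
    exact pos_of_mul_pos_right h2 (by positivity)

/-- In any fan of length `n+1` whose parameters lie in `(0, π/2)`, some
non-hinge angle `x_i = 2·w i − w (i−1) − w (i+1)` is strictly less than
`π/(⌊n/2⌋·⌈n/2⌉)`. -/
theorem exists_small_nonhinge_angle (n : ℕ) (hn : 2 ≤ n) (w : ℕ → ℝ)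
    (hrange : ∀ j : ℕ, j ≤ n → 0 < w j ∧ w j < π / 2) :
    ∃ i : ℕ, 1 ≤ i ∧ i ≤ n - 1 ∧
      2 * w i - w (i - 1) - w (i + 1)
        < π / (((n / 2 : ℕ) : ℝ) * (((n + 1) / 2 : ℕ) : ℝ)) := by
  by_contra! hcon
  have hm : (0 : ℝ) < ((n / 2 : ℕ) : ℝ) := by
    exact_mod_cast (by omega : 0 < n / 2)
  have hM : (0 : ℝ) < (((n + 1) / 2 : ℕ) : ℝ) := by
    exact_mod_cast (by omega : 0 < (n + 1) / 2)
  have hsum : (n : ℝ) = ((n / 2 : ℕ) : ℝ) + (((n + 1) / 2 : ℕ) : ℝ) := by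
    exact_mod_cast (by omega : n = n / 2 + (n + 1) / 2)
  set c := π / (((n / 2 : ℕ) : ℝ) * (((n + 1) / 2 : ℕ) : ℝ)) with hc
  have hcm : c * (((n / 2 : ℕ) : ℝ) * (((n + 1) / 2 : ℕ) : ℝ)) = π :=
    div_mul_cancel₀ _ (by positivity)
  have hpos := pos_of_concave (n := n) (v := fun i => w i - c / 2 * (i * (n - i)))
    (by
      intro k hk
      have h := hcon (k + 1) (by omega) (by omega)
      rw [show k + 1 - 1 = k from rfl, show k + 1 + 1 = k + 2 from rfl] at h
      push_cast
      linarith)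
    (by simpa using (hrange 0 (by omega)).1)
    (by simpa using (hrange n le_rfl).1)
    (n / 2) (by omega)
  have hlt := (hrange (n / 2) (by omega)).2
  have hdiff : (n : ℝ) - ((n / 2 : ℕ) : ℝ) = (((n + 1) / 2 : ℕ) : ℝ) := by linarith
  simp only [hdiff] at hpos
  linarith
end
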